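/- Let (𝒜,c) be a configuration in ℂ^N whose covectors belong to a lattice of rank N in (ℂ^N)*, let λ ∈ ℂ∖{0}, and suppose (𝒜,c,λ) satisfies the trigonometric WDVV equations. Let W ⊆ (ℂ^N)* be a subspace, B = 𝒜 ∩ W with span(B) = W, and let S = {α₁,…,α_k} ⊆ B be a basis of W; assume C_{δ_α}^{α₀} ≠ 0 for every α ∈ S and every α₀ ∈ δ_α. Let W_B = {x ∈ ℂ^N : β(x) = 0 for all β ∈ B}, assume the restriction of G_𝒜 to W_B is non-degenerate, and let the restricted configuration π_B(𝒜) on W_B consist of the nonzero restrictions ᾱ = α|_{W_B} of covectors α ∈ 𝒜∖B, the multiplicity of a covector ᾱ ∈ π_B(𝒜) being c_{ᾱ} = Σ c_α over all α ∈ 𝒜∖B with α|_{W_B} = ᾱ. Then the restricted configuration (π_B(𝒜), c), viewed as a configuration in W_B ≅ ℂ^n (n = dim W_B) via any linear isomorphism, together with the same constant λ satisfies the trigonometric WDVV equations, i.e. the matrices of third-order partial derivatives of the restricted prepotential F_B(ξ,y) = y³/3 + Σ_{ᾱ∈π_B(𝒜)} c_{ᾱ} ᾱ(ξ)² y + λ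 Σ_{ᾱ∈π_B(𝒜)} c_{ᾱ} f(ᾱ(ξ)) satisfy the WDVV matrix relations. -/

import Mathlib

open scoped Classical
open Finset

noncomputable section

/-- Evaluation of a covector `α` on a vector `x` in `ℂ^N`. -/
def ev {N : ℕ} (α x : Fin N → ℂ) : ℂ := ∑ i, α i * x i

/-- The bilinear form `G_𝒜` associated to a configuration. -/
def Gform {N : ℕ} (A : Finset (Fin N → ℂ)) (c : (Fin N → ℂ) → ℂ)
    (u v : Fin N → ℂ) : ℂ :=
  ∑ α ∈ A, c α * ev α u * ev α v

/-- `(α ∧ β)(a, b) = α(a)β(b) - α(b)β(a)`. -/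
def wedge {N : ℕ} (α β a b : Fin N → ℂ) : ℂ :=
  ev α a * ev β b - ev α b * ev β a

/-- Non-degeneracy of `G_𝒜`. -/
def Nondeg {N : ℕ} (A : Finset (Fin N → ℂ)) (c : (Fin N → ℂ) → ℂ) : Prop :=
  ∀ u : Fin N → ℂ, (∀ v : Fin N → ℂ, Gform A c u v = 0) → u = 0

/-- `dual` assigns to each covector `γ ∈ 𝒜` its `G_𝒜`-dual vector `γ^∨`. -/
def IsDual {N : ℕ} (A : Finset (Fin N → ℂ)) (c : (Fin N → ℂ) → ℂ)
    (dual : (Fin N → ℂ) → Fin N → ℂ) : Prop :=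
  ∀ γ ∈ A, ∀ v : Fin N → ℂ, Gform A c (dual γ) v = ev γ v

/-- `γ` is proportional to `α`. -/
def Collin {N : ℕ} (α γ : Fin N → ℂ) : Prop := ∃ t : ℂ, γ = t • α

/-- `γ₁ ∼ γ₂` iff `γ₁ + γ₂` or `γ₁ - γ₂` is an integer multiple of `α`. -/
def SeriesRel {N : ℕ} (α γ₁ γ₂ : Fin N → ℂ) : Prop :=
  ∃ m : ℤ, γ₁ + γ₂ = (m : ℂ) • α ∨ γ₁ - γ₂ = (m : ℂ) • α

/-- `Γ` is an (maximal) `α`-series of the configuration `A`. -/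
def IsSeries {N : ℕ} (A : Finset (Fin N → ℂ)) (α : Fin N → ℂ)
    (Γ : Finset (Fin N → ℂ)) : Prop :=
  Γ.Nonempty ∧ (∀ γ ∈ Γ, γ ∈ A ∧ ¬ Collin α γ) ∧
    (∀ γ₁ ∈ Γ, ∀ γ₂ ∈ Γ, SeriesRel α γ₁ γ₂) ∧
    (∀ β ∈ A, ¬ Collin α β → (∃ γ ∈ Γ, SeriesRel α β γ) → β ∈ Γ)

/-- The trigonometric ∨-conditions. -/
def IsTrigVSystem {N : ℕ} (A : Finset (Fin N → ℂ)) (c : (Fin N → ℂ) → ℂ)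
    (dual : (Fin N → ℂ) → Fin N → ℂ) : Prop :=
  ∀ α ∈ A, ∀ Γ : Finset (Fin N → ℂ), IsSeries A α Γ →
    ∀ a b : Fin N → ℂ, ∑ β ∈ Γ, c β * ev α (dual β) * wedge α β a b = 0

/-- The form `G^{(1)}_𝒜` evaluated at `(u, v)`. -/
def G1form {N : ℕ} (A : Finset (Fin N → ℂ)) (c : (Fin N → ℂ) → ℂ)
    (u v : Fin N → ℂ) : ℂ :=
  ∑ α ∈ A, ∑ β ∈ A, c α * c β * wedge α β u v ^ 2

/-- The form `G^{(2)}_𝒜` evaluated at `(u, v)`. -/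
def G2form {N : ℕ} (A : Finset (Fin N → ℂ)) (c : (Fin N → ℂ) → ℂ)
    (dual : (Fin N → ℂ) → Fin N → ℂ) (u v : Fin N → ℂ) : ℂ :=
  ∑ α ∈ A, ∑ β ∈ A,
    c α * c β * Gform A c (dual α) (dual β) * wedge α β u v ^ 2

/-- Complex cotangent. -/
def ccot (z : ℂ) : ℂ := Complex.cos z / Complex.sin z

/-- The matrix `F_i(x)` of third derivatives of the prepotential, `1 ≤ i ≤ N`. -/
def Fmat {N : ℕ} (A : Finset (Fin N → ℂ)) (c : (Fin N → ℂ) → ℂ) (lam : ℂ)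
    (i : Fin N) (x : Fin N → ℂ) : Matrix (Fin N ⊕ Unit) (Fin N ⊕ Unit) ℂ :=
  Matrix.of fun p q =>
    match p, q with
    | Sum.inl p, Sum.inl q => lam * ∑ α ∈ A, c α * α i * α p * α q * ccot (ev α x)
    | Sum.inl p, Sum.inr _ => 2 * ∑ α ∈ A, c α * α i * α p
    | Sum.inr _, Sum.inl q => 2 * ∑ α ∈ A, c α * α i * α q
    | Sum.inr _, Sum.inr _ => 0

/-- The constant matrix `F_{N+1}`. -/
def Flast {N : ℕ} (A : Finset (Fin N → ℂ)) (c : (Fin N → ℂ) → ℂ) :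
    Matrix (Fin N ⊕ Unit) (Fin N ⊕ Unit) ℂ :=
  Matrix.of fun p q =>
    match p, q with
    | Sum.inl p, Sum.inl q => 2 * ∑ α ∈ A, c α * α p * α q
    | Sum.inr _, Sum.inr _ => 2
    | _, _ => 0

/-- `(𝒜, c, λ)` satisfies the trigonometric WDVV equations. -/
def SatisfiesWDVV {N : ℕ} (A : Finset (Fin N → ℂ)) (c : (Fin N → ℂ) → ℂ)
    (lam : ℂ) : Prop :=
  IsUnit (Flast A c) ∧
    ∀ x : Fin N → ℂ, (∀ α ∈ A, Complex.sin (ev α x) ≠ 0) →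
      ∀ i j : Fin N,
        Fmat A c lam i x * (Flast A c)⁻¹ * Fmat A c lam j x =
          Fmat A c lam j x * (Flast A c)⁻¹ * Fmat A c lam i x

/-- The covectors of `𝒜` lie in a lattice of full rank `N` in `(ℂ^N)^*`. -/
def InLattice {N : ℕ} (A : Finset (Fin N → ℂ)) : Prop :=
  ∃ L : Fin N → Fin N → ℂ, LinearIndependent ℂ L ∧
    ∀ α ∈ A, ∃ m : Fin N → ℤ, α = ∑ i, (m i : ℂ) • L i

/-- No two covectors of `𝒜` are negatively proportional. -/
def PositiveSystem {N : ℕ} (A : Finset (Fin N → ℂ)) : Prop :=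
  ∀ α ∈ A, ∀ t : ℝ, t < 0 → (t : ℂ) • α ∉ A

/-- The restriction of a covector `α` to `W_B ≅ ℂ^n` via the parametrisation `φ`. -/
def resCov {N n : ℕ} (φ : (Fin n → ℂ) →ₗ[ℂ] (Fin N → ℂ)) (α : Fin N → ℂ) :
    Fin n → ℂ :=
  fun i => ev α (φ (Pi.single i 1))

/-- The set of nonzero restrictions of covectors of `𝒜 ∖ B` to `W_B`. -/
def resConfig {N n : ℕ} (A B : Finset (Fin N → ℂ))
    (φ : (Fin n → ℂ) →ₗ[ℂ] (Fin N → ℂ)) : Finset (Fin n → ℂ) :=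
  ((A \ B).filter (fun α => resCov φ α ≠ 0)).image (resCov φ)

/-- The multiplicity of a restricted covector: the sum of multiplicities of all
covectors of `𝒜 ∖ B` restricting to it. -/
def resMult {N n : ℕ} (A B : Finset (Fin N → ℂ)) (c : (Fin N → ℂ) → ℂ)
    (φ : (Fin n → ℂ) →ₗ[ℂ] (Fin N → ℂ)) (β : Fin n → ℂ) : ℂ :=
  ∑ α ∈ (A \ B).filter (fun α => resCov φ α = β), c α

open Matrix in
/-- Matrix of `G_𝒜`. -/
def gA {N : ℕ} (A : Finset (Fin N → ℂ)) (c : (Fin N → ℂ) → ℂ) : Matrix (Fin N) (Fin N) ℂ :=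
  ∑ α ∈ A, c α • Matrix.vecMulVec α α

open Matrix in
/-- Directional version of the upper left block. -/
def MU {N : ℕ} (A : Finset (Fin N → ℂ)) (c : (Fin N → ℂ) → ℂ) (x u : Fin N → ℂ) :
    Matrix (Fin N) (Fin N) ℂ :=
  ∑ α ∈ A, (c α * (α ⬝ᵥ u) * ccot (α ⬝ᵥ x)) • Matrix.vecMulVec α α

open Matrix in
/-- The covector `M_u a`. -/
def TT {N : ℕ} (A : Finset (Fin N → ℂ)) (c : (Fin N → ℂ) → ℂ) (x u a : Fin N → ℂ) :
    Fin N → ℂ :=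
  ∑ α ∈ A, (c α * (α ⬝ᵥ u) * (α ⬝ᵥ a) * ccot (α ⬝ᵥ x)) • α

section alg
open Matrix

lemma ev_eq {N : ℕ} (α x : Fin N → ℂ) : ev α x = α ⬝ᵥ x := rfl

lemma MU_mulVec {N : ℕ} (A : Finset (Fin N → ℂ)) (c : (Fin N → ℂ) → ℂ) (x u a : Fin N → ℂ) :
    MU A c x u *ᵥ a = TT A c x u a := by
  unfold MU TT
  rw [Matrix.sum_mulVec]
  refine Finset.sum_congr rfl fun α _ => ?_
  rw [Matrix.smul_mulVec, Matrix.vecMulVec_mulVec]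
  ext i
  simp
  ring

lemma MU_transpose {N : ℕ} (A : Finset (Fin N → ℂ)) (c : (Fin N → ℂ) → ℂ) (x u : Fin N → ℂ) :
    (MU A c x u)ᵀ = MU A c x u := by
  unfold MU
  rw [Matrix.transpose_sum]
  refine Finset.sum_congr rfl fun α _ => ?_
  rw [Matrix.transpose_smul, Matrix.transpose_vecMulVec]

lemma gA_transpose {N : ℕ} (A : Finset (Fin N → ℂ)) (c : (Fin N → ℂ) → ℂ) :
    (gA A c)ᵀ = gA A c := by
  unfold gA
  rw [Matrix.transpose_sum]
  refine Finset.sum_congr rfl fun α _ => ?_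
  rw [Matrix.transpose_smul, Matrix.transpose_vecMulVec]

lemma gA_form {N : ℕ} (A : Finset (Fin N → ℂ)) (c : (Fin N → ℂ) → ℂ) (u v : Fin N → ℂ) :
    (gA A c *ᵥ u) ⬝ᵥ v = ∑ α ∈ A, c α * ((α ⬝ᵥ u) * (α ⬝ᵥ v)) := by
  unfold gA
  rw [Matrix.sum_mulVec, sum_dotProduct]
  refine Finset.sum_congr rfl fun α _ => ?_
  rw [Matrix.smul_mulVec, Matrix.vecMulVec_mulVec]
  simp [smul_dotProduct]

lemma TT_symm {N : ℕ} (A : Finset (Fin N → ℂ)) (c : (Fin N → ℂ) → ℂ) (x u a : Fin N → ℂ) :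
    TT A c x u a = TT A c x a u := by
  unfold TT
  refine Finset.sum_congr rfl fun α _ => ?_
  congr 1
  ring

lemma TT_dot {N : ℕ} (A : Finset (Fin N → ℂ)) (c : (Fin N → ℂ) → ℂ) (x u a v : Fin N → ℂ) :
    TT A c x u a ⬝ᵥ v
      = ∑ α ∈ A, c α * ((α ⬝ᵥ u) * (α ⬝ᵥ a) * ccot (α ⬝ᵥ x) * (α ⬝ᵥ v)) := by
  unfold TT
  rw [sum_dotProduct]
  refine Finset.sum_congr rfl fun α _ => ?_
  rw [smul_dotProduct, smul_eq_mul]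
  ring

/-- directional third derivative matrix in block form -/
def FU {N : ℕ} (A : Finset (Fin N → ℂ)) (c : (Fin N → ℂ) → ℂ) (lam : ℂ)
    (x u : Fin N → ℂ) : Matrix (Fin N ⊕ Unit) (Fin N ⊕ Unit) ℂ :=
  Matrix.fromBlocks (lam • MU A c x u) (Matrix.replicateCol Unit ((2 : ℂ) • (gA A c *ᵥ u)))
    (Matrix.replicateRow Unit ((2 : ℂ) • (gA A c *ᵥ u))) 0

lemma gA_mulVec_apply {N : ℕ} (A : Finset (Fin N → ℂ)) (c : (Fin N → ℂ) → ℂ) (u : Fin N → ℂ)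
    (p : Fin N) : (gA A c *ᵥ u) p = ∑ α ∈ A, c α * (α ⬝ᵥ u) * α p := by
  unfold gA
  rw [Matrix.sum_mulVec, Finset.sum_apply]
  refine Finset.sum_congr rfl fun α _ => ?_
  rw [Matrix.smul_mulVec, Matrix.vecMulVec_mulVec]
  simp
  ring

lemma FU_eq_sum {N : ℕ} (A : Finset (Fin N → ℂ)) (c : (Fin N → ℂ) → ℂ) (lam : ℂ)
    (x u : Fin N → ℂ) : FU A c lam x u = ∑ i, u i • Fmat A c lam i x := by
  ext p q
  rcases p with p | p <;> rcases q with q | q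
  · simp only [FU, Fmat, MU, Matrix.fromBlocks_apply₁₁, Matrix.smul_apply, Matrix.sum_apply,
      Matrix.of_apply, smul_eq_mul, Finset.mul_sum, Matrix.vecMulVec_apply, dotProduct,
      Finset.sum_mul, ev]
    rw [Finset.sum_comm]
    refine Finset.sum_congr rfl fun i _ => Finset.sum_congr rfl fun α _ => ?_
    ring
  · simp only [FU, Fmat, Matrix.fromBlocks_apply₁₂, Matrix.smul_apply, Matrix.sum_apply,
      Matrix.of_apply, smul_eq_mul, Finset.mul_sum, dotProduct, Matrix.replicateCol_apply,
      Finset.sum_mul, gA_mulVec_apply, Pi.smul_apply]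
    rw [Finset.sum_comm]
    refine Finset.sum_congr rfl fun i _ => Finset.sum_congr rfl fun α _ => ?_
    ring
  · simp only [FU, Fmat, Matrix.fromBlocks_apply₂₁, Matrix.smul_apply, Matrix.sum_apply,
      Matrix.of_apply, smul_eq_mul, Finset.mul_sum, dotProduct, Matrix.replicateRow_apply,
      Finset.sum_mul, gA_mulVec_apply, Pi.smul_apply]
    rw [Finset.sum_comm]
    refine Finset.sum_congr rfl fun i _ => Finset.sum_congr rfl fun α _ => ?_
    ring
  · simp [FU, Fmat, Matrix.sum_apply]

lemma FU_single {N : ℕ} (A : Finset (Fin N → ℂ)) (c : (Fin N → ℂ) → ℂ) (lam : ℂ)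
    (x : Fin N → ℂ) (i : Fin N) : FU A c lam x (Pi.single i 1) = Fmat A c lam i x := by
  rw [FU_eq_sum]
  rw [Finset.sum_eq_single i]
  · simp
  · intro j _ hj
    simp [hj]
  · simp

lemma Flast_eq {N : ℕ} (A : Finset (Fin N → ℂ)) (c : (Fin N → ℂ) → ℂ) :
    Flast A c = Matrix.fromBlocks ((2 : ℂ) • gA A c) 0 0 ((2 : ℂ) • (1 : Matrix Unit Unit ℂ)) := by
  ext p q
  rcases p with p | p <;> rcases q with q | q
  · simp only [Flast, gA, Matrix.fromBlocks_apply₁₁, Matrix.smul_apply, Matrix.sum_apply,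
      Matrix.of_apply, smul_eq_mul, Matrix.vecMulVec_apply, mul_assoc]
  · simp [Flast]
  · simp [Flast]
  · simp [Flast]

lemma isUnit_Flast {N : ℕ} (A : Finset (Fin N → ℂ)) (c : (Fin N → ℂ) → ℂ) :
    IsUnit (Flast A c) ↔ IsUnit (gA A c) := by
  have h2 : ∀ {ι : Type} [Fintype ι] [DecidableEq ι] (M : Matrix ι ι ℂ),
      IsUnit ((2 : ℂ) • M) ↔ IsUnit M := by
    intro ι _ _ M
    rw [Matrix.isUnit_iff_isUnit_det, Matrix.isUnit_iff_isUnit_det, Matrix.det_smul]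
    simp
  rw [Flast_eq, Matrix.isUnit_fromBlocks_zero₁₂, h2, h2]
  simp

lemma Flast_inv {N : ℕ} (A : Finset (Fin N → ℂ)) (c : (Fin N → ℂ) → ℂ) (h : IsUnit (gA A c)) :
    (Flast A c)⁻¹ = Matrix.fromBlocks ((1 / 2 : ℂ) • (gA A c)⁻¹) 0 0
      ((1 / 2 : ℂ) • (1 : Matrix Unit Unit ℂ)) := by
  apply Matrix.inv_eq_right_inv
  rw [Flast_eq, Matrix.fromBlocks_multiply]
  have := Matrix.mul_nonsing_inv (gA A c) ((Matrix.isUnit_iff_isUnit_det _).1 h)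
  simp [this, smul_smul, Matrix.fromBlocks_one]

/-- scalar form of the WDVV equations -/
def ScalarId {N : ℕ} (A : Finset (Fin N → ℂ)) (c : (Fin N → ℂ) → ℂ) (lam : ℂ)
    (x u v a b : Fin N → ℂ) : Prop :=
  lam ^ 2 * (TT A c x u a ⬝ᵥ ((gA A c)⁻¹ *ᵥ TT A c x v b)
      - TT A c x v a ⬝ᵥ ((gA A c)⁻¹ *ᵥ TT A c x u b))
    + 4 * (((gA A c *ᵥ u) ⬝ᵥ a) * ((gA A c *ᵥ v) ⬝ᵥ b)
      - ((gA A c *ᵥ v) ⬝ᵥ a) * ((gA A c *ᵥ u) ⬝ᵥ b)) = 0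

lemma FU_prod {N : ℕ} (A : Finset (Fin N → ℂ)) (c : (Fin N → ℂ) → ℂ) (lam : ℂ)
    (h : IsUnit (gA A c)) (x u v : Fin N → ℂ) :
    FU A c lam x u * (Flast A c)⁻¹ * FU A c lam x v =
      Matrix.fromBlocks
        ((lam ^ 2 / 2) • (MU A c x u * (gA A c)⁻¹ * MU A c x v)
          + (2 : ℂ) • Matrix.vecMulVec (gA A c *ᵥ u) (gA A c *ᵥ v))
        (Matrix.replicateCol Unit (lam • TT A c x u v))
        (Matrix.replicateRow Unit (lam • TT A c x u v))
        (Matrix.of fun _ _ => 2 * ((gA A c *ᵥ u) ⬝ᵥ v)) := by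
  have hdet := (Matrix.isUnit_iff_isUnit_det _).1 h
  have hinv : (gA A c)⁻¹ *ᵥ (gA A c *ᵥ v) = v := by
    rw [Matrix.mulVec_mulVec, Matrix.nonsing_inv_mul _ hdet, Matrix.one_mulVec]
  have hinv' : (gA A c *ᵥ u) ᵥ* (gA A c)⁻¹ = u := by
    rw [← gA_transpose A c, Matrix.mulVec_transpose, Matrix.vecMul_vecMul, gA_transpose,
      Matrix.mul_nonsing_inv _ hdet, Matrix.vecMul_one]
  rw [Flast_inv A c h, FU, FU, Matrix.fromBlocks_multiply, Matrix.fromBlocks_multiply]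
  congr 1
  · ext p q
    simp [Matrix.mul_apply, Matrix.vecMulVec_apply, Matrix.mul_assoc]
    ring
  · simp only [Matrix.mul_zero, zero_add, add_zero]
    rw [← Matrix.replicateCol_mulVec]
    congr 1
    rw [← Matrix.mulVec_mulVec]
    simp only [Matrix.smul_mulVec, Matrix.mulVec_smul, hinv, MU_mulVec, smul_smul]
    norm_num
  · simp only [Matrix.mul_zero, Matrix.zero_mul, add_zero]
    rw [← Matrix.replicateRow_vecMul, ← Matrix.replicateRow_vecMul]
    congr 1
    simp only [Matrix.vecMul_smul, Matrix.smul_vecMul, hinv', smul_smul]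
    rw [← Matrix.mulVec_transpose, MU_transpose, MU_mulVec, TT_symm]
    norm_num
  · ext p q
    simp only [Matrix.mul_zero, Matrix.zero_mul, add_zero]
    rw [← Matrix.replicateRow_vecMul]
    simp only [Matrix.vecMul_smul, Matrix.smul_vecMul, hinv', smul_smul]
    simp only [Matrix.mul_apply, Matrix.replicateRow_apply, Matrix.replicateCol_apply,
      Matrix.of_apply, Pi.smul_apply, smul_eq_mul, dotProduct, Finset.mul_sum]
    simp only [← Finset.mul_sum]
    have e : ∑ i, (gA A c *ᵥ u) i * v i = ∑ i, u i * (gA A c *ᵥ v) i := by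
      change (gA A c *ᵥ u) ⬝ᵥ v = u ⬝ᵥ (gA A c *ᵥ v)
      rw [dotProduct_comm u, gA_form, gA_form]
      refine Finset.sum_congr rfl fun α _ => ?_
      ring
    rw [e, Finset.mul_sum]
    refine Finset.sum_congr rfl fun i _ => ?_
    ring

lemma matrix_eq_zero_iff {N : ℕ} (M : Matrix (Fin N) (Fin N) ℂ) :
    M = 0 ↔ ∀ a b : Fin N → ℂ, a ⬝ᵥ (M *ᵥ b) = 0 := by
  constructor
  · rintro rfl a b
    simp
  · intro h
    ext i j
    have := h (Pi.single i 1) (Pi.single j 1)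
    simpa using this

lemma FU_comm_iff {N : ℕ} (A : Finset (Fin N → ℂ)) (c : (Fin N → ℂ) → ℂ) (lam : ℂ)
    (h : IsUnit (gA A c)) (x u v : Fin N → ℂ) :
    FU A c lam x u * (Flast A c)⁻¹ * FU A c lam x v
      = FU A c lam x v * (Flast A c)⁻¹ * FU A c lam x u ↔
    ∀ a b, ScalarId A c lam x u v a b := by
  have hg : (gA A c *ᵥ u) ⬝ᵥ v = (gA A c *ᵥ v) ⬝ᵥ u := by
    rw [gA_form, gA_form]
    refine Finset.sum_congr rfl fun α _ => ?_
    ring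
  rw [FU_prod A c lam h, FU_prod A c lam h, TT_symm A c x v u, hg, Matrix.fromBlocks_inj]
  simp only [and_true]
  rw [← sub_eq_zero, matrix_eq_zero_iff]
  refine forall_congr' fun a => forall_congr' fun b => ?_
  have key : ∀ u v : Fin N → ℂ, a ⬝ᵥ ((MU A c x u * (gA A c)⁻¹ * MU A c x v) *ᵥ b)
      = TT A c x u a ⬝ᵥ ((gA A c)⁻¹ *ᵥ TT A c x v b) := by
    intro u v
    rw [← Matrix.mulVec_mulVec, ← Matrix.mulVec_mulVec, MU_mulVec A c x v, Matrix.dotProduct_mulVec a,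
      ← Matrix.mulVec_transpose (MU A c x u), MU_transpose, MU_mulVec]
  have key2 : ∀ u v : Fin N → ℂ, a ⬝ᵥ (Matrix.vecMulVec (gA A c *ᵥ u) (gA A c *ᵥ v) *ᵥ b)
      = ((gA A c *ᵥ u) ⬝ᵥ a) * ((gA A c *ᵥ v) ⬝ᵥ b) := by
    intro u v
    rw [Matrix.vecMulVec_mulVec]
    simp [dotProduct_comm, mul_comm]
  simp only [Matrix.sub_mulVec, Matrix.add_mulVec, Matrix.smul_mulVec, dotProduct_sub,
    dotProduct_add, dotProduct_smul, key, key2, smul_eq_mul, ScalarId]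
  constructor
  · intro h
    linear_combination 2 * h
  · intro h
    linear_combination (1 / 2) * h

theorem wdvv_iff {N : ℕ} (A : Finset (Fin N → ℂ)) (c : (Fin N → ℂ) → ℂ) (lam : ℂ) :
    SatisfiesWDVV A c lam ↔ IsUnit (gA A c) ∧
      ∀ x : Fin N → ℂ, (∀ α ∈ A, Complex.sin (α ⬝ᵥ x) ≠ 0) →
        ∀ u v a b, ScalarId A c lam x u v a b := by
  unfold SatisfiesWDVV
  rw [isUnit_Flast]
  refine and_congr_right fun h => forall_congr' fun x => imp_congr Iff.rfl ?_
  constructor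
  · intro H u v
    rw [← FU_comm_iff A c lam h, FU_eq_sum, FU_eq_sum]
    simp only [Finset.sum_mul, Finset.mul_sum, Matrix.smul_mul, Matrix.mul_smul]
    rw [Finset.sum_comm]
    refine Finset.sum_congr rfl fun i _ => Finset.sum_congr rfl fun j _ => ?_
    rw [H, smul_comm]
  · intro H i j
    rw [← FU_single, ← FU_single]
    exact (FU_comm_iff A c lam h x _ _).2 (H _ _)

end alg
section ana
open Matrix Filter Topology

lemma sin_eventually_ne {N : ℕ} (α x y : Fin N → ℂ)
    (h : Complex.sin (α ⬝ᵥ x) ≠ 0 ∨ α ⬝ᵥ y ≠ 0) :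
    ∀ᶠ t : ℂ in 𝓝[≠] 0, Complex.sin (α ⬝ᵥ (x + t • y)) ≠ 0 := by
  have e : ∀ t : ℂ, α ⬝ᵥ (x + t • y) = α ⬝ᵥ x + t * (α ⬝ᵥ y) := by
    intro t
    rw [dotProduct_add, dotProduct_smul, smul_eq_mul]
  simp only [e]
  by_cases h0 : Complex.sin (α ⬝ᵥ x) = 0
  · have hy : α ⬝ᵥ y ≠ 0 := h.resolve_left (not_not.2 h0)
    have hd : HasDerivAt (fun t : ℂ => Complex.sin (α ⬝ᵥ x + t * (α ⬝ᵥ y)))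
        (Complex.cos (α ⬝ᵥ x + 0 * (α ⬝ᵥ y)) * (1 * (α ⬝ᵥ y))) 0 :=
      (((hasDerivAt_id (0 : ℂ)).mul_const (α ⬝ᵥ y)).const_add (α ⬝ᵥ x)).csin
    refine hd.eventually_ne ?_
    have hc : Complex.cos (α ⬝ᵥ x) ≠ 0 := by
      intro hc
      have := Complex.sin_sq_add_cos_sq (α ⬝ᵥ x)
      rw [h0, hc] at this
      norm_num at this
    simpa using ⟨hc, hy⟩
  · have hc : ContinuousAt (fun t : ℂ => Complex.sin (α ⬝ᵥ x + t * (α ⬝ᵥ y))) 0 := by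
      fun_prop
    have := hc.eventually_ne (y := 0) (by simpa using h0)
    exact this.filter_mono nhdsWithin_le_nhds

lemma ccot_tendsto {N : ℕ} (α x y : Fin N → ℂ) (h : Complex.sin (α ⬝ᵥ x) ≠ 0) :
    Tendsto (fun t : ℂ => ccot (α ⬝ᵥ (x + t • y))) (𝓝[≠] 0) (𝓝 (ccot (α ⬝ᵥ x))) := by
  have e : ∀ t : ℂ, α ⬝ᵥ (x + t • y) = α ⬝ᵥ x + t * (α ⬝ᵥ y) := by
    intro t
    rw [dotProduct_add, dotProduct_smul, smul_eq_mul]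
  simp only [e]
  have hc : ContinuousAt (fun t : ℂ => ccot (α ⬝ᵥ x + t * (α ⬝ᵥ y))) 0 := by
    unfold ccot
    refine ContinuousAt.div (by fun_prop) (by fun_prop) (by simpa using h)
  have := hc.tendsto
  simp only [zero_mul, add_zero] at this
  exact this.mono_left nhdsWithin_le_nhds

lemma TT_tendsto {N : ℕ} (A : Finset (Fin N → ℂ)) (c : (Fin N → ℂ) → ℂ) (x y u a : Fin N → ℂ)
    (h : ∀ α ∈ A, Complex.sin (α ⬝ᵥ x) ≠ 0 ∨ α ⬝ᵥ u = 0 ∨ α ⬝ᵥ a = 0) :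
    Tendsto (fun t : ℂ => TT A c (x + t • y) u a) (𝓝[≠] 0) (𝓝 (TT A c x u a)) := by
  unfold TT
  refine tendsto_finsetSum _ fun α hα => ?_
  rcases h α hα with h | h | h
  · exact ((ccot_tendsto α x y h).const_mul _).smul_const _
  · simp [h]
  · simp [h]

lemma bil_tendsto {N : ℕ} (M : Matrix (Fin N) (Fin N) ℂ) {l : Filter ℂ}
    {f g : ℂ → Fin N → ℂ} {p q : Fin N → ℂ} (hf : Tendsto f l (𝓝 p)) (hg : Tendsto g l (𝓝 q)) :
    Tendsto (fun t => f t ⬝ᵥ (M *ᵥ g t)) l (𝓝 (p ⬝ᵥ (M *ᵥ q))) := by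
  have hf' := tendsto_pi_nhds.1 hf
  have hg' := tendsto_pi_nhds.1 hg
  simp only [dotProduct, Matrix.mulVec]
  exact tendsto_finsetSum _ fun i _ => (hf' i).mul
    (tendsto_finsetSum _ fun j _ => (hg' j).const_mul (M i j))

/-- the scalar identity extends to non-regular points when no pole is seen -/
lemma scalarId_limit {N : ℕ} (A : Finset (Fin N → ℂ)) (c : (Fin N → ℂ) → ℂ) (lam : ℂ)
    (hA0 : ∀ α ∈ A, α ≠ (0 : Fin N → ℂ))
    (H : ∀ x : Fin N → ℂ, (∀ α ∈ A, Complex.sin (α ⬝ᵥ x) ≠ 0) →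
        ∀ u v a b, ScalarId A c lam x u v a b) (x u v a b : Fin N → ℂ)
    (h : ∀ α ∈ A, Complex.sin (α ⬝ᵥ x) ≠ 0 ∨ (α ⬝ᵥ u = 0 ∧ α ⬝ᵥ v = 0)) :
    ScalarId A c lam x u v a b := by
  obtain ⟨y, hy⟩ : ∃ y : Fin N → ℂ, ∀ α ∈ A, α ⬝ᵥ y ≠ 0 := by
    obtain ⟨y, hy⟩ := Module.Dual.exists_forall_ne_zero_of_forall_exists
      (fun α : A => dotProductBilin ℂ ℂ α.1) (by
        rintro ⟨α, hα⟩
        by_contra! hc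
        refine hA0 α hα ?_
        ext i
        simpa using hc (Pi.single i 1))
    exact ⟨y, fun α hα => hy ⟨α, hα⟩⟩
  have hev : ∀ᶠ t : ℂ in 𝓝[≠] 0, ∀ α ∈ A, Complex.sin (α ⬝ᵥ (x + t • y)) ≠ 0 := by
    rw [Filter.eventually_all_finset]
    exact fun α hα => sin_eventually_ne α x y (Or.inr (hy α hα))
  have tu : ∀ a, Tendsto (fun t : ℂ => TT A c (x + t • y) u a) (𝓝[≠] 0) (𝓝 (TT A c x u a)) :=
    fun a => TT_tendsto A c x y u a fun α hα => (h α hα).imp id fun h => Or.inl h.1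
  have tv : ∀ a, Tendsto (fun t : ℂ => TT A c (x + t • y) v a) (𝓝[≠] 0) (𝓝 (TT A c x v a)) :=
    fun a => TT_tendsto A c x y v a fun α hα => (h α hα).imp id fun h => Or.inl h.2
  have T := (((bil_tendsto (gA A c)⁻¹ (tu a) (tv b)).sub
    (bil_tendsto (gA A c)⁻¹ (tv a) (tu b))).const_mul (lam ^ 2)).add_const
    (4 * (((gA A c *ᵥ u) ⬝ᵥ a) * ((gA A c *ᵥ v) ⬝ᵥ b)
      - ((gA A c *ᵥ v) ⬝ᵥ a) * ((gA A c *ᵥ u) ⬝ᵥ b)))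
  refine tendsto_nhds_unique T ?_
  refine tendsto_const_nhds.congr' ?_
  filter_upwards [hev] with t ht
  exact (H _ ht u v a b).symm

lemma mul_cot_tendsto (k : ℂ) (hk : k ≠ 0) :
    Tendsto (fun t : ℂ => t * ccot (t * k)) (𝓝[≠] 0) (𝓝 k⁻¹) := by
  have hd : HasDerivAt (fun t : ℂ => Complex.sin (t * k)) (Complex.cos (0 * k) * (1 * k)) 0 :=
    ((hasDerivAt_id (0 : ℂ)).mul_const k).csin
  have h1 := hd.tendsto_slope_zero
  simp only [zero_add, zero_mul, Complex.sin_zero, sub_zero, Complex.cos_zero, one_mul,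
    smul_eq_mul] at h1
  have h2 : Tendsto (fun t : ℂ => Complex.cos (t * k)) (𝓝[≠] 0) (𝓝 1) := by
    have hc : ContinuousAt (fun t : ℂ => Complex.cos (t * k)) 0 := by fun_prop
    have := hc.tendsto
    simp only [zero_mul, Complex.cos_zero] at this
    exact this.mono_left nhdsWithin_le_nhds
  have h3 := h2.mul (h1.inv₀ hk)
  rw [one_mul] at h3
  refine h3.congr fun t => ?_
  unfold ccot
  rw [mul_inv, inv_inv]
  ring

lemma pole_lemma {N : ℕ} (A : Finset (Fin N → ℂ)) (c : (Fin N → ℂ) → ℂ) (lam : ℂ)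
    (hlam : lam ≠ 0)
    (hA0 : ∀ α ∈ A, α ≠ (0 : Fin N → ℂ))
    (H : ∀ x : Fin N → ℂ, (∀ α ∈ A, Complex.sin (α ⬝ᵥ x) ≠ 0) →
        ∀ u v a b, ScalarId A c lam x u v a b)
    (γ : Fin N → ℂ) (hγ : γ ∈ A)
    (hC : ∀ kk : (Fin N → ℂ) → ℂ, (∀ γ' ∈ A, Collin γ γ' → γ' = kk γ' • γ) →
        ∑ γ' ∈ A.filter (fun γ' => Collin γ γ'), c γ' * kk γ' ^ 2 ≠ 0)
    (x u a : Fin N → ℂ) (hx : γ ⬝ᵥ x = 0) (hu : γ ⬝ᵥ u = 0) (ha : γ ⬝ᵥ a = 0)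
    (hreg : ∀ α ∈ A, ¬ Collin γ α → Complex.sin (α ⬝ᵥ x) ≠ 0) :
    TT A c x u a ⬝ᵥ ((gA A c)⁻¹ *ᵥ γ) = 0 := by
  obtain ⟨y, hy⟩ : ∃ y : Fin N → ℂ, γ ⬝ᵥ y = 1 := by
    obtain ⟨i, hi⟩ := Function.ne_iff.1 (hA0 γ hγ)
    refine ⟨Pi.single i (γ i)⁻¹, ?_⟩
    rw [dotProduct_single]
    exact mul_inv_cancel₀ hi
  have hcol : ∀ α, Collin γ α → α = (α ⬝ᵥ y) • γ := by
    rintro α ⟨t, rfl⟩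
    rw [smul_dotProduct, hy, smul_eq_mul, mul_one]
  have hcol0 : ∀ α ∈ A, Collin γ α → α ⬝ᵥ y ≠ 0 := by
    intro α hα h h0
    have := hcol α h
    rw [h0, zero_smul] at this
    exact hA0 α hα this
  have hcolz : ∀ α, Collin γ α → ∀ z, γ ⬝ᵥ z = 0 → α ⬝ᵥ z = 0 := by
    rintro α ⟨t, rfl⟩ z hz
    rw [smul_dotProduct, hz, smul_zero]
  have hC' := hC (fun α => α ⬝ᵥ y) (fun α _ h => hcol α h)
  have hev : ∀ᶠ t : ℂ in 𝓝[≠] 0, ∀ α ∈ A, Complex.sin (α ⬝ᵥ (x + t • y)) ≠ 0 := by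
    rw [Filter.eventually_all_finset]
    intro α hα
    refine sin_eventually_ne α x y ?_
    by_cases h : Collin γ α
    · exact Or.inr (hcol0 α hα h)
    · exact Or.inl (hreg α hα h)
  have t1 : ∀ w, Tendsto (fun t : ℂ => TT A c (x + t • y) u w) (𝓝[≠] 0) (𝓝 (TT A c x u w)) := by
    intro w
    refine TT_tendsto A c x y u w fun α hα => ?_
    by_cases h : Collin γ α
    · exact Or.inr (Or.inl (hcolz α h u hu))
    · exact Or.inl (hreg α hα h)
  have t2 : Tendsto (fun t : ℂ => TT A c (x + t • y) y a) (𝓝[≠] 0) (𝓝 (TT A c x y a)) := by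
    refine TT_tendsto A c x y y a fun α hα => ?_
    by_cases h : Collin γ α
    · exact Or.inr (Or.inr (hcolz α h a ha))
    · exact Or.inl (hreg α hα h)
  have tid : Tendsto (fun t : ℂ => t) (𝓝[≠] 0) (𝓝 0) := tendsto_id.mono_left nhdsWithin_le_nhds
  set C := ∑ γ' ∈ A.filter (fun γ' => Collin γ γ'), c γ' * (γ' ⬝ᵥ y) ^ 2 with hCdef
  have t3 : Tendsto (fun t : ℂ => t • TT A c (x + t • y) y y) (𝓝[≠] 0) (𝓝 (C • γ)) := by
    rw [hCdef, Finset.sum_filter, Finset.sum_smul]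
    unfold TT
    simp only [Finset.smul_sum]
    refine tendsto_finsetSum _ fun α hα => ?_
    by_cases h : Collin γ α
    · rw [if_pos h]
      have hk := hcol0 α hα h
      have hxz := hcolz α h x hx
      have T := ((mul_cot_tendsto (α ⬝ᵥ y) hk).const_mul (c α * (α ⬝ᵥ y) * (α ⬝ᵥ y))).smul_const α
      have e : (c α * (α ⬝ᵥ y) * (α ⬝ᵥ y) * (α ⬝ᵥ y)⁻¹) • α = (c α * (α ⬝ᵥ y) ^ 2) • γ := by
        conv_lhs => rw [hcol α h]
        rw [smul_smul, ← hcol α h]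
        congr 1
        field_simp
      rw [e] at T
      refine T.congr fun t => ?_
      rw [smul_smul, dotProduct_add, hxz, zero_add, dotProduct_smul, smul_eq_mul]
      congr 1
      ring
    · rw [if_neg h, zero_smul]
      have T := (tid.mul ((ccot_tendsto α x y (hreg α hα h)).const_mul
        (c α * (α ⬝ᵥ y) * (α ⬝ᵥ y)))).smul_const α
      rw [zero_mul, zero_smul] at T
      refine T.congr fun t => ?_
      rw [smul_smul]
  set K := 4 * (((gA A c *ᵥ u) ⬝ᵥ a) * ((gA A c *ᵥ y) ⬝ᵥ y)
      - ((gA A c *ᵥ y) ⬝ᵥ a) * ((gA A c *ᵥ u) ⬝ᵥ y)) with hK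
  have T := (((bil_tendsto (gA A c)⁻¹ (t1 a) t3).sub
    (tid.mul (bil_tendsto (gA A c)⁻¹ t2 (t1 y)))).const_mul (lam ^ 2)).add (tid.mul_const K)
  have T0 : Tendsto (fun _ : ℂ => (0 : ℂ)) (𝓝[≠] 0) (𝓝 0) := tendsto_const_nhds
  have := tendsto_nhds_unique T (T0.congr' (by
    filter_upwards [hev] with t ht
    have h := H _ ht u y a y
    unfold ScalarId at h
    rw [← hK] at h
    rw [Matrix.mulVec_smul, dotProduct_smul, smul_eq_mul]
    linear_combination (-t) * h))
  rw [Matrix.mulVec_smul, dotProduct_smul, smul_eq_mul] at this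
  simp only [zero_mul, sub_zero, add_zero] at this
  have h2 := (mul_eq_zero.1 this).resolve_left (pow_ne_zero 2 hlam)
  exact (mul_eq_zero.1 h2).resolve_left hC'

lemma exists_not_collin {N : ℕ} (γ β : Fin N → ℂ) (hγ : γ ≠ 0) (h : ¬ Collin γ β) :
    ∃ y, γ ⬝ᵥ y = 0 ∧ β ⬝ᵥ y ≠ 0 := by
  by_contra! hc
  apply h
  obtain ⟨i, hi⟩ := Function.ne_iff.1 hγ
  have hi' : γ i ≠ 0 := hi
  refine ⟨β i / γ i, ?_⟩
  ext j
  have := hc (γ i • Pi.single j 1 - γ j • Pi.single i 1) (by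
    simp [dotProduct_sub, dotProduct_smul]
    ring)
  simp [dotProduct_sub, dotProduct_smul] at this
  simp only [Pi.smul_apply, smul_eq_mul]
  field_simp
  linear_combination this

/-- vanishing on more degenerate strata -/
lemma stratum_lemma {N : ℕ} (A : Finset (Fin N → ℂ)) (c : (Fin N → ℂ) → ℂ) (lam : ℂ)
    (hlam : lam ≠ 0)
    (hA0 : ∀ α ∈ A, α ≠ (0 : Fin N → ℂ))
    (H : ∀ x : Fin N → ℂ, (∀ α ∈ A, Complex.sin (α ⬝ᵥ x) ≠ 0) →
        ∀ u v a b, ScalarId A c lam x u v a b)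
    (γ : Fin N → ℂ) (hγ : γ ∈ A)
    (hC : ∀ kk : (Fin N → ℂ) → ℂ, (∀ γ' ∈ A, Collin γ γ' → γ' = kk γ' • γ) →
        ∑ γ' ∈ A.filter (fun γ' => Collin γ γ'), c γ' * kk γ' ^ 2 ≠ 0)
    (x u a : Fin N → ℂ) (hx : γ ⬝ᵥ x = 0) (hu : γ ⬝ᵥ u = 0) (ha : γ ⬝ᵥ a = 0)
    (hreg : ∀ α ∈ A, Complex.sin (α ⬝ᵥ x) ≠ 0 ∨ α ⬝ᵥ u = 0) :
    TT A c x u a ⬝ᵥ ((gA A c)⁻¹ *ᵥ γ) = 0 := by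
  obtain ⟨y, hy, hy'⟩ : ∃ y : Fin N → ℂ, γ ⬝ᵥ y = 0 ∧ ∀ α ∈ A, ¬ Collin γ α → α ⬝ᵥ y ≠ 0 := by
    obtain ⟨y, hy, hy'⟩ := Module.Dual.exists_forall_mem_ne_zero_of_forall_exists
      (LinearMap.ker (dotProductBilin ℂ ℂ γ))
      (fun α : A.filter (fun α => ¬ Collin γ α) => dotProductBilin ℂ ℂ α.1) (by
        rintro ⟨α, hα⟩
        exact exists_not_collin γ α (hA0 γ hγ) (Finset.mem_filter.1 hα).2)
    exact ⟨y, hy, fun α hα h => hy' ⟨α, Finset.mem_filter.2 ⟨hα, h⟩⟩⟩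
  have hev : ∀ᶠ t : ℂ in 𝓝[≠] 0, ∀ α ∈ A, ¬ Collin γ α →
      Complex.sin (α ⬝ᵥ (x + t • y)) ≠ 0 := by
    rw [Filter.eventually_all_finset]
    intro α hα
    by_cases h : Collin γ α
    · simp [h]
    · simpa [h] using sin_eventually_ne α x y (Or.inr (hy' α hα h))
  have T := bil_tendsto (gA A c)⁻¹
    (TT_tendsto A c x y u a fun α hα => (hreg α hα).imp id Or.inl)
    (tendsto_const_nhds (x := γ))
  have T0 : Tendsto (fun _ : ℂ => (0 : ℂ)) (𝓝[≠] 0) (𝓝 0) := tendsto_const_nhds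
  refine tendsto_nhds_unique T (T0.congr' ?_)
  filter_upwards [hev] with t ht
  refine (pole_lemma A c lam hlam hA0 H γ hγ hC (x + t • y) u a ?_ hu ha ht).symm
  rw [dotProduct_add, dotProduct_smul, hx, hy]
  simp

end ana
section res
open Matrix

lemma resCov_dot {N n : ℕ} (φ : (Fin n → ℂ) →ₗ[ℂ] (Fin N → ℂ)) (α : Fin N → ℂ)
    (w : Fin n → ℂ) : resCov φ α ⬝ᵥ w = α ⬝ᵥ φ w := by
  have hw : w = ∑ i, w i • (Pi.single i 1 : Fin n → ℂ) := by
    ext j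
    simp [Finset.sum_apply, Pi.single_apply]
  conv_rhs => rw [hw]
  rw [map_sum, dotProduct_sum]
  simp only [map_smul, dotProduct_smul, smul_eq_mul]
  unfold dotProduct resCov
  refine Finset.sum_congr rfl fun i _ => ?_
  rw [ev_eq, mul_comm]
  rfl

lemma res_sum {N n : ℕ} (A B : Finset (Fin N → ℂ)) (c : (Fin N → ℂ) → ℂ)
    (φ : (Fin n → ℂ) →ₗ[ℂ] (Fin N → ℂ)) (hBz : ∀ β ∈ B, resCov φ β = 0)
    (h : (Fin n → ℂ) → ℂ) (h0 : h 0 = 0) :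
    ∑ β ∈ resConfig A B φ, resMult A B c φ β * h β = ∑ α ∈ A, c α * h (resCov φ α) := by
  have e1 : ∑ α ∈ A, c α * h (resCov φ α)
      = ∑ α ∈ (A \ B).filter (fun α => resCov φ α ≠ 0), c α * h (resCov φ α) := by
    symm
    apply Finset.sum_subset
    · intro α hα
      exact (Finset.mem_sdiff.1 (Finset.mem_filter.1 hα).1).1
    · intro α hα hn
      have : resCov φ α = 0 := by
        by_contra hne
        apply hn
        refine Finset.mem_filter.2 ⟨Finset.mem_sdiff.2 ⟨hα, fun hb => hne (hBz α hb)⟩, hne⟩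
      rw [this, h0, mul_zero]
  rw [e1, ← Finset.sum_fiberwise_of_maps_to (t := resConfig A B φ) (g := resCov φ)
    (fun α hα => Finset.mem_image_of_mem _ hα)]
  refine Finset.sum_congr rfl fun β hβ => ?_
  obtain ⟨α₀, hα₀, rfl⟩ := Finset.mem_image.1 hβ
  have hne := (Finset.mem_filter.1 hα₀).2
  unfold resMult
  rw [Finset.sum_mul]
  refine Finset.sum_congr ?_ ?_
  · ext α
    simp only [Finset.mem_filter]
    constructor
    · rintro ⟨h1, h2⟩
      exact ⟨⟨h1, by rw [h2]; exact hne⟩, h2⟩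
    · rintro ⟨⟨h1, _⟩, h2⟩
      exact ⟨h1, h2⟩
  · intro α hα
    rw [(Finset.mem_filter.1 hα).2]

end res

open Matrix in
/-- restriction of a trigonometric solution of the WDVV equations to the
subspace `W_B` again satisfies the trigonometric WDVV equations. -/
theorem restriction_satisfies_WDVV {N n : ℕ}
    (A : Finset (Fin N → ℂ)) (c : (Fin N → ℂ) → ℂ) (lam : ℂ)
    (hA0 : ∀ α ∈ A, α ≠ (0 : Fin N → ℂ))
    (hlat : InLattice A)
    (hlam : lam ≠ 0)
    (hwdvv : SatisfiesWDVV A c lam)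
    (W : Submodule ℂ (Fin N → ℂ)) (B : Finset (Fin N → ℂ))
    (hB : ∀ α : Fin N → ℂ, α ∈ B ↔ α ∈ A ∧ α ∈ W)
    (hWspan : W = Submodule.span ℂ (B : Set (Fin N → ℂ)))
    (k : ℕ) (S : Fin k → (Fin N → ℂ))
    (hSB : ∀ i, S i ∈ B)
    (hSind : LinearIndependent ℂ S)
    (hSspan : Submodule.span ℂ (Set.range S) = W)
    (hC : ∀ i : Fin k, ∀ α₀ ∈ A, Collin (S i) α₀ →
      ∀ kk : (Fin N → ℂ) → ℂ, (∀ γ ∈ A, Collin (S i) γ → γ = kk γ • α₀) →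
        ∑ γ ∈ A.filter (fun γ => Collin (S i) γ), c γ * kk γ ^ 2 ≠ 0)
    (φ : (Fin n → ℂ) →ₗ[ℂ] (Fin N → ℂ))
    (hφinj : Function.Injective φ)
    (hφrange : Set.range φ = {x : Fin N → ℂ | ∀ β ∈ B, ev β x = 0})
    (hGnd : ∀ u : Fin N → ℂ, (∀ β ∈ B, ev β u = 0) →
      (∀ v : Fin N → ℂ, (∀ β ∈ B, ev β v = 0) → Gform A c u v = 0) → u = 0) :
    SatisfiesWDVV (resConfig A B φ) (resMult A B c φ) lam := by
  have hBz : ∀ β ∈ B, ∀ w, ev β (φ w) = 0 := by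
    intro β hβ w
    have : φ w ∈ {x : Fin N → ℂ | ∀ β ∈ B, ev β x = 0} := hφrange ▸ Set.mem_range_self w
    exact this β hβ
  have hBz' : ∀ β ∈ B, resCov φ β = 0 := fun β hβ => funext fun i => hBz β hβ _
  obtain ⟨hg, H⟩ := (wdvv_iff A c lam).1 hwdvv
  have hdet := (Matrix.isUnit_iff_isUnit_det _).1 hg
  set A' := resConfig A B φ with hA'
  set c' := resMult A B c φ with hc'
  have hG : ∀ u v : Fin n → ℂ, (gA A' c' *ᵥ u) ⬝ᵥ v = (gA A c *ᵥ φ u) ⬝ᵥ φ v := by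
    intro u v
    rw [gA_form, gA_form, hA', hc',
      res_sum A B c φ hBz' (fun β => (β ⬝ᵥ u) * (β ⬝ᵥ v)) (by simp)]
    simp only [resCov_dot]
  have hT : ∀ ξ u a v : Fin n → ℂ,
      TT A' c' ξ u a ⬝ᵥ v = TT A c (φ ξ) (φ u) (φ a) ⬝ᵥ φ v := by
    intro ξ u a v
    rw [TT_dot, TT_dot, hA', hc',
      res_sum A B c φ hBz' (fun β => (β ⬝ᵥ u) * (β ⬝ᵥ a) * ccot (β ⬝ᵥ ξ) * (β ⬝ᵥ v)) (by simp)]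
    simp only [resCov_dot]
  have hg' : IsUnit (gA A' c') := by
    rw [← Matrix.mulVec_injective_iff_isUnit]
    intro w₁ w₂ hw
    apply hφinj
    rw [← sub_eq_zero, ← map_sub]
    have hz : gA A' c' *ᵥ (w₁ - w₂) = 0 := by
      rw [Matrix.mulVec_sub]
      exact sub_eq_zero.2 hw
    refine hGnd _ (fun β hβ => hBz β hβ _) fun v hv => ?_
    have hv' : v ∈ Set.range φ := by
      rw [hφrange]
      exact hv
    obtain ⟨v, rfl⟩ := hv'
    have h1 := hG (w₁ - w₂) v
    rw [hz, zero_dotProduct, gA_form] at h1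
    rw [h1]
    unfold Gform
    refine Finset.sum_congr rfl fun α _ => ?_
    rw [ev_eq, ev_eq, mul_assoc]
  have hdet' := (Matrix.isUnit_iff_isUnit_det _).1 hg'
  rw [wdvv_iff]
  refine ⟨hg', fun ξ hξ => ?_⟩
  have hreg : ∀ α ∈ A, Complex.sin (α ⬝ᵥ φ ξ) ≠ 0 ∨ ∀ w, α ⬝ᵥ φ w = 0 := by
    intro α hα
    by_cases h0 : resCov φ α = 0
    · right
      intro w
      rw [← resCov_dot, h0, zero_dotProduct]
    · left
      rw [← resCov_dot]
      refine hξ _ (Finset.mem_image_of_mem _ (Finset.mem_filter.2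
        ⟨Finset.mem_sdiff.2 ⟨hα, fun hb => h0 (hBz' α hb)⟩, h0⟩))
  -- the tangent space of `W_B` is closed under multiplication
  have hQ : ∀ u a : Fin n → ℂ, (gA A c)⁻¹ *ᵥ TT A c (φ ξ) (φ u) (φ a)
      = φ ((gA A' c')⁻¹ *ᵥ TT A' c' ξ u a) := by
    intro u a
    set Q := (gA A c)⁻¹ *ᵥ TT A c (φ ξ) (φ u) (φ a) with hQdef
    have hSQ : ∀ i, S i ⬝ᵥ Q = 0 := by
      intro i
      have hSA : S i ∈ A := ((hB _).1 (hSB i)).1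
      have hz := hBz (S i) (hSB i)
      have := stratum_lemma A c lam hlam hA0 H (S i) hSA
        (fun kk hkk => hC i (S i) hSA ⟨1, (one_smul _ _).symm⟩ kk hkk)
        (φ ξ) (φ u) (φ a) (hz _) (hz _) (hz _)
        (fun α hα => (hreg α hα).imp id fun h => h u)
      rw [hQdef, Matrix.dotProduct_mulVec, ← Matrix.mulVec_transpose,
        Matrix.transpose_nonsing_inv, gA_transpose, dotProduct_comm]
      exact this
    have hWQ : W ≤ LinearMap.ker ((dotProductBilin ℂ ℂ).flip Q) := by
      rw [← hSspan, Submodule.span_le]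
      rintro _ ⟨i, rfl⟩
      exact hSQ i
    have hQmem : Q ∈ Set.range φ := by
      rw [hφrange]
      intro β hβ
      exact hWQ ((hB β).1 hβ).2
    obtain ⟨w, hw⟩ := hQmem
    rw [← hw]
    congr 1
    have : gA A' c' *ᵥ w = TT A' c' ξ u a := by
      apply dotProduct_eq
      intro v
      rw [hG, hT, hw, hQdef, Matrix.mulVec_mulVec, Matrix.mul_nonsing_inv _ hdet,
        Matrix.one_mulVec]
    rw [← this, Matrix.mulVec_mulVec, Matrix.nonsing_inv_mul _ hdet', Matrix.one_mulVec]
  intro u v a b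
  have key := scalarId_limit A c lam hA0 H (φ ξ) (φ u) (φ v) (φ a) (φ b)
    (fun α hα => (hreg α hα).imp id fun h => ⟨h u, h v⟩)
  unfold ScalarId at key ⊢
  rw [hT, hT, ← hQ, ← hQ, hG, hG, hG, hG]
  exact key

end
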